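/- Let n, m be finite types, let N ∈ ℕ, and for each j ∈ Fin N let Λ_j, Γ_j, Φ_j : Matrix n n ℂ →ₗ[ℂ] Matrix n n ℂ satisfy Λ_j = (1+r_j) • Γ_j - r_j • Φ_j with r_j ≥ 0 and Γ_j, Φ_j completely positive and trace-preserving. Let p_j ≥ 0 (j ∈ Fin N), let Ψ ∈ Matrix (m × n) (m × n) ℂ be a density matrix, and let (M_j)_{j ∈ Fin (N+1)} be positive semidefinite matrices with Σ_j M_j = 1 (a POVM with a possible inconclusive outcome M_N). Then the average channel-discrimination success probability satisfies Σ_{j ∈ Fin N} p_j · Re Tr((id_m ⊗ Λ_j)(Ψ) · M_j) ≤ (1 + max_{j ∈ Fin N} r_j) · Σ_{j ∈ Fin N} p_j · Re Tr((id_m ⊗ Γ_j)(Ψ) · M_j), provided N ≥ 1. -/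

import Mathlib

open Matrix
open scoped ComplexOrder

open scoped MatrixOrder in
/-- The trace norm of a matrix: the trace of the positive semidefinite square root of `AᴴA`. -/
noncomputable def traceNorm {n : Type*} [Fintype n] [DecidableEq n] (A : Matrix n n ℂ) : ℝ :=
  ((CFC.sqrt (Aᴴ * A)).trace).re

/-- The blockwise application `id_m ⊗ Φ` of a linear map `Φ` on `Matrix n n ℂ`:
`((id_m ⊗ Φ)(Δ))((i,k),(j,l)) = (Φ(Δ_{i,j}))(k,l)` where `Δ_{i,j}(k,l) = Δ((i,k),(j,l))`
is the `(i,j)` block of `Δ`. -/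
def idTensor (m : Type*) [Fintype m] {n : Type*} [Fintype n]
    (Φ : Matrix n n ℂ →ₗ[ℂ] Matrix n n ℂ) :
    Matrix (m × n) (m × n) ℂ →ₗ[ℂ] Matrix (m × n) (m × n) ℂ where
  toFun Δ := Matrix.of fun p q =>
    (Φ (Matrix.of fun k l => Δ (p.1, k) (q.1, l))) p.2 q.2
  map_add' Δ Δ' := by
    have h : ∀ i j : m, (Matrix.of fun k l => (Δ + Δ') (i, k) (j, l))
        = (Matrix.of fun k l => Δ (i, k) (j, l))
          + (Matrix.of fun k l => Δ' (i, k) (j, l)) := by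
      intro i j; ext k l; simp [Matrix.add_apply]
    ext ⟨i, k⟩ ⟨j, l⟩
    simp only [Matrix.of_apply, Matrix.add_apply]
    rw [← Matrix.add_apply, ← map_add, ← h]
    rfl
  map_smul' c Δ := by
    have h : ∀ i j : m, (Matrix.of fun k l => (c • Δ) (i, k) (j, l))
        = c • (Matrix.of fun k l => Δ (i, k) (j, l)) := by
      intro i j; ext k l; simp [Matrix.smul_apply]
    ext ⟨i, k⟩ ⟨j, l⟩
    simp only [Matrix.of_apply, Matrix.smul_apply, RingHom.id_apply]
    rw [← Matrix.smul_apply, ← LinearMap.map_smul, ← h]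
    rfl

/-- Complete positivity: `id_m ⊗ Φ` maps positive semidefinite matrices to positive
semidefinite matrices for every finite type `m`. -/
def IsCompletelyPositive {n : Type*} [Fintype n]
    (Φ : Matrix n n ℂ →ₗ[ℂ] Matrix n n ℂ) : Prop :=
  ∀ (m : Type) (_ : Fintype m) (Δ : Matrix (m × n) (m × n) ℂ),
    Δ.PosSemidef → (idTensor m Φ Δ).PosSemidef

/-- Trace preservation. -/
def IsTracePreserving {n : Type*} [Fintype n]
    (Φ : Matrix n n ℂ →ₗ[ℂ] Matrix n n ℂ) : Prop :=
  ∀ X : Matrix n n ℂ, (Φ X).trace = X.trace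

/-- A density matrix: positive semidefinite with unit trace. -/
def IsDensityMatrix {N : Type*} [Fintype N] (ρ : Matrix N N ℂ) : Prop :=
  ρ.PosSemidef ∧ ρ.trace = 1

open scoped MatrixOrder in
/-- The trace of a product of two positive semidefinite matrices has nonnegative real part. -/
theorem Matrix.PosSemidef.re_trace_mul_nonneg {ι : Type*} [Fintype ι]
    {A B : Matrix ι ι ℂ} (hA : A.PosSemidef) (hB : B.PosSemidef) :
    0 ≤ ((A * B).trace).re := by
  classical
  obtain ⟨C, rfl⟩ := CStarAlgebra.nonneg_iff_eq_star_mul_self.mp hB.nonneg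
  rw [star_eq_conjTranspose, ← Matrix.mul_assoc, Matrix.trace_mul_comm, ← Matrix.mul_assoc]
  exact (Complex.nonneg_iff.mp (hA.mul_mul_conjTranspose_same C).trace_nonneg).1

/-- Complete positivity applies to ancillas living in an arbitrary universe. -/
theorem IsCompletelyPositive.posSemidef_idTensor {n m : Type*} [Fintype n] [Fintype m]
    {Φ : Matrix n n ℂ →ₗ[ℂ] Matrix n n ℂ} (hΦ : IsCompletelyPositive Φ)
    {Δ : Matrix (m × n) (m × n) ℂ} (hΔ : Δ.PosSemidef) : (idTensor m Φ Δ).PosSemidef := by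
  let e := (Fintype.equivFin m).prodCongr (Equiv.refl n)
  have h : idTensor m Φ Δ =
      (idTensor (Fin (Fintype.card m)) Φ (Δ.submatrix e.symm e.symm)).submatrix e e := by
    ext p q
    simp [idTensor, e]
  rw [h]
  exact (hΦ _ _ _ (hΔ.submatrix e.symm)).submatrix e

theorem idTensor_sub {n m : Type*} [Fintype n] [Fintype m]
    (Φ Θ : Matrix n n ℂ →ₗ[ℂ] Matrix n n ℂ) :
    idTensor m (Φ - Θ) = idTensor m Φ - idTensor m Θ :=
  rfl

theorem idTensor_smul {n m : Type*} [Fintype n] [Fintype m] (c : ℂ)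
    (Φ : Matrix n n ℂ →ₗ[ℂ] Matrix n n ℂ) :
    idTensor m (c • Φ) = c • idTensor m Φ :=
  rfl

/-- Upper-bound half of the channel-discrimination interpretation of the robustness of
non-Markovianity: for an ensemble of maps `Λ_j = (1+r_j)Γ_j - r_jΦ_j` with `Γ_j, Φ_j`
completely positive and trace-preserving, the success probability of discriminating the
`Λ_j` is at most `(1 + max_j r_j)` times that of the Markovian ensemble `Γ_j`. -/
theorem channel_discrimination_bound {n m : Type*} [Fintype n] [DecidableEq n]
    [Fintype m] [DecidableEq m] (N : ℕ) (hN : 1 ≤ N)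
    (Λ Γ Φ : Fin N → (Matrix n n ℂ →ₗ[ℂ] Matrix n n ℂ)) (r : Fin N → ℝ)
    (hr : ∀ j, 0 ≤ r j)
    (hΓCP : ∀ j, IsCompletelyPositive (Γ j)) (hΓTP : ∀ j, IsTracePreserving (Γ j))
    (hΦCP : ∀ j, IsCompletelyPositive (Φ j)) (hΦTP : ∀ j, IsTracePreserving (Φ j))
    (hdec : ∀ j, Λ j = (((1 + r j : ℝ) : ℂ)) • Γ j - ((r j : ℝ) : ℂ) • Φ j)
    (p : Fin N → ℝ) (hp : ∀ j, 0 ≤ p j)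
    (Ψ : Matrix (m × n) (m × n) ℂ) (hΨ : IsDensityMatrix Ψ)
    (M : Fin (N + 1) → Matrix (m × n) (m × n) ℂ) (hMpos : ∀ j, (M j).PosSemidef)
    (hMsum : ∑ j, M j = 1) :
    ∑ j : Fin N, p j * ((idTensor m (Λ j) Ψ * M j.castSucc).trace).re ≤
      (1 + Finset.univ.sup' (Finset.univ_nonempty_iff.mpr
          (Fin.pos_iff_nonempty.mp hN)) r) *
        ∑ j : Fin N, p j * ((idTensor m (Γ j) Ψ * M j.castSucc).trace).re := by
  rw [Finset.mul_sum]
  refine Finset.sum_le_sum fun j _ => ?_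
  have hΓ := (((hΓCP j).posSemidef_idTensor hΨ.1).re_trace_mul_nonneg (hMpos j.castSucc))
  have hΦ := (((hΦCP j).posSemidef_idTensor hΨ.1).re_trace_mul_nonneg (hMpos j.castSucc))
  have hle := Finset.le_sup' r (Finset.mem_univ j)
  rw [hdec j, idTensor_sub, idTensor_smul, idTensor_smul, mul_left_comm]
  refine mul_le_mul_of_nonneg_left ?_ (hp j)
  simp only [LinearMap.sub_apply, LinearMap.smul_apply, Matrix.sub_mul, Matrix.smul_mul,
    Matrix.trace_sub, Matrix.trace_smul, Complex.sub_re, smul_eq_mul, Complex.re_ofReal_mul]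
  calc _ ≤ (1 + r j) * ((idTensor m (Γ j) Ψ * M j.castSucc).trace).re :=
        sub_le_self _ (mul_nonneg (hr j) hΦ)
    _ ≤ _ := by gcongr
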